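/- arXiv:math/0604031 — 5 statements merged into one kernel-verified Lean document; each statement's English description precedes it below -/
import Mathlib

section
/- Let X be a square group. Then T := HP − 1 : X_ee → X_ee is a group homomorphism and an involution, i.e. T∘T = id. -/
open scoped TensorProduct

/-- The cross effect `(a|b)_H = H(a+b) - H(b) - H(a)` of a function `H` from a group to an
abelian group. -/
def crossEff {Xe : Type*} {Xee : Type*} [AddGroup Xe] [AddCommGroup Xee]
    (H : Xe → Xee) (a b : Xe) : Xee :=
  H (a + b) - H b - H a

/-- A square group: a group `Xe` (written additively, not necessarily abelian), an abelian
group `Xee`, a homomorphism `P : Xee → Xe` and a quadratic map `H : Xe → Xee` (i.e. a function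
whose cross effect is bilinear), subject to `(Px|b)_H = 0`, `(a|Py)_H = 0`,
`P(a|b)_H = [a,b] = -a-b+a+b` and `PHP(x) = P(x) + P(x)`. -/
structure SquareGroup (Xe : Type*) (Xee : Type*) [AddGroup Xe] [AddCommGroup Xee] where
  P : Xee →+ Xe
  H : Xe → Xee
  cross_add_left : ∀ a a' b : Xe, crossEff H (a + a') b = crossEff H a b + crossEff H a' b
  cross_add_right : ∀ a b b' : Xe, crossEff H a (b + b') = crossEff H a b + crossEff H a b'
  cross_P_left : ∀ (x : Xee) (b : Xe), crossEff H (P x) b = 0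
  cross_P_right : ∀ (a : Xe) (y : Xee), crossEff H a (P y) = 0
  P_cross : ∀ a b : Xe, P (crossEff H a b) = -a - b + a + b
  PHP : ∀ x : Xee, P (H (P x)) = P x + P x

namespace SquareGroup

variable {Xe Xee : Type*} [AddGroup Xe] [AddCommGroup Xee]

/-- The involution `T = HP - 1` of a square group. -/
def T (S : SquareGroup Xe Xee) (x : Xee) : Xee := S.H (S.P x) - x

/-- The homomorphism `Δ(x) = (x|x)_H - H(x) + TH(x)` of a square group. -/
def Δ (S : SquareGroup Xe Xee) (x : Xe) : Xee :=
  crossEff S.H x x - S.H x + S.T (S.H x)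

end SquareGroup

/-- For any square group `X`, the function `T := HP - 1 : X_ee → X_ee` is a
group homomorphism and an involution, i.e. `T ∘ T = id`. -/
theorem squareGroup_T_addHom_and_involution
    {Xe Xee : Type*} [AddGroup Xe] [AddCommGroup Xee] (S : SquareGroup Xe Xee) :
    (∀ x y : Xee, S.T (x + y) = S.T x + S.T y) ∧ (∀ x : Xee, S.T (S.T x) = x) := by
  refine ⟨fun x y => ?_, fun x => ?_⟩
  · -- `H` is additive on the image of `P`, since `(Px|Py)_H = 0`.
    have h : S.H (S.P x + S.P y) - S.H (S.P y) - S.H (S.P x) = 0 :=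
      S.cross_P_left x (S.P y)
    have h' : S.H (S.P x + S.P y) = S.H (S.P x) + S.H (S.P y) := by
      rw [sub_sub, sub_eq_zero] at h
      rw [h, add_comm]
    simp only [SquareGroup.T, map_add, h']
    abel
  · -- `PT = P`, because `PHP = P + P`; hence `TT = HPT - T = HP - T = 1`.
    have h : S.P (S.T x) = S.P x := by
      rw [SquareGroup.T, map_sub, S.PHP, add_sub_cancel_right]
    change S.H (S.P (S.T x)) - S.T x = x
    rw [h, SquareGroup.T, sub_sub_cancel]
end

section
/- Let X be a square group. Then Δ : X_e → X_ee defined by Δ(x) = (x|x)_H − H(x) + TH(x) is a group homomorphism and satisfies TΔ = −Δ. -/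
/-!
`T = HP - 1` is additive, because cross effects vanish on the image of `P`, and it is an
involution, by `PHP = 2P`. Applying `H` to `a + b = (b + a) + P(a|b)_H` gives
`HP(a|b)_H = (a|b)_H - (b|a)_H`, that is `T(a|b)_H = -(b|a)_H`. Hence the cross effect of `Δ` at
`(x, y)` is `(x|y)_H + (y|x)_H - (x|y)_H + T(x|y)_H = 0`, and
`TΔ(x) = -(x|x)_H - TH(x) + H(x) = -Δ(x)`.
-/

open scoped TensorProduct

namespace SquareGroup

variable {Xe Xee : Type*} [AddGroup Xe] [AddCommGroup Xee]

lemma H_add (S : SquareGroup Xe Xee) (a b : Xe) :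
    S.H (a + b) = S.H a + S.H b + crossEff S.H a b := by
  unfold crossEff; abel

lemma T_add (S : SquareGroup Xe Xee) (x y : Xee) : S.T (x + y) = S.T x + S.T y := by
  unfold T
  rw [map_add, H_add, S.cross_P_left]; abel

lemma T_sub (S : SquareGroup Xe Xee) (x y : Xee) : S.T (x - y) = S.T x - S.T y := by
  rw [eq_sub_iff_add_eq, ← T_add, sub_add_cancel]

lemma T_T (S : SquareGroup Xe Xee) (x : Xee) : S.T (S.T x) = x := by
  have h : S.T (S.H (S.P x)) = S.H (S.P x) := by
    unfold T
    rw [S.PHP, H_add, S.cross_P_left]; abel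
  have h' : S.T (S.T x) = S.T (S.H (S.P x)) - S.T x := S.T_sub _ _
  rw [h', h]; unfold T; abel

lemma T_cross (S : SquareGroup Xe Xee) (a b : Xe) :
    S.T (crossEff S.H a b) = -crossEff S.H b a := by
  have hc : a + b = (b + a) + S.P (crossEff S.H a b) := by
    rw [S.P_cross]; simp [sub_eq_add_neg, add_assoc]
  have h := S.H_add (b + a) (S.P (crossEff S.H a b))
  rw [← hc, S.cross_P_right, H_add, H_add] at h
  have h2 : S.H (S.P (crossEff S.H a b)) = crossEff S.H a b - crossEff S.H b a := by
    rw [eq_sub_iff_add_eq]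
    apply add_left_cancel (a := S.H a + S.H b)
    rw [h]; abel
  unfold T
  rw [h2]; abel

end SquareGroup

/-- For any square group `X`, the function
`Δ(x) = (x|x)_H - H(x) + TH(x) : X_e → X_ee` is a group homomorphism and satisfies `TΔ = -Δ`. -/
theorem squareGroup_Δ_addHom_and_T_neg
    {Xe Xee : Type*} [AddGroup Xe] [AddCommGroup Xee] (S : SquareGroup Xe Xee) :
    (∀ x y : Xe, S.Δ (x + y) = S.Δ x + S.Δ y) ∧ (∀ x : Xe, S.T (S.Δ x) = - S.Δ x) := by
  refine ⟨fun x y => ?_, fun x => ?_⟩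
  · unfold SquareGroup.Δ
    rw [S.cross_add_left, S.cross_add_right, S.cross_add_right, S.H_add, S.T_add, S.T_add,
      S.T_cross]
    abel
  · unfold SquareGroup.Δ
    rw [S.T_add, S.T_sub, S.T_T, S.T_cross]
    abel
end

section
/- Let C be a quadratic pair module. The formula x^y := x + P(∂(x)|y)_H defines a right action of the group C₀ on the group C₁ by group automorphisms, and with this action ∂ : C₁ → C₀ is a crossed module: ∂(x^y) = −y + ∂(x) + y for all x ∈ C₁, y ∈ C₀, and x^{∂(z)} = −z + x + z for all x, z ∈ C₁. -/
/-!
The two facts behind the crossed module structure are that the image of `P` is central in a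
square group, because `[a, P w] = P (a | P w)_H = 0`, and that `(∂x | ∂z)_H = (x | z)_{H∂}`,
so that `P (∂x | ∂z)_H` is the commutator `[x, z]` in `C₁`. The action axioms then follow from
bilinearity of the cross effect and its vanishing on the image of `P`, and the two crossed
module identities from `P (a | b)_H = [a, b]` in `C₀` and in `C₁` respectively.
-/

open scoped TensorProduct

/-- A quadratic pair module: a morphism `∂ : C_(1) → C_(0)` of square groups which is the
identity on `ee`-groups.  It is determined by a diagram
`C_ee --P--> C₁ --∂--> C₀ --H--> C_ee` with `H₁ = H∂` and `P₀ = ∂P`. -/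
structure QPM (C0 C1 Cee : Type*) [AddGroup C0] [AddGroup C1] [AddCommGroup Cee] where
  sq0 : SquareGroup C0 Cee
  sq1 : SquareGroup C1 Cee
  d : C1 →+ C0
  d_comp_P : ∀ x : Cee, d (sq1.P x) = sq0.P x
  H_comp_d : ∀ z : C1, sq1.H z = sq0.H (d z)

variable {C0 C1 Cee D0 D1 Dee E0 E1 Eee B0 B1 Bee : Type*}
  [AddGroup C0] [AddGroup C1] [AddCommGroup Cee]
  [AddGroup D0] [AddGroup D1] [AddCommGroup Dee]
  [AddGroup E0] [AddGroup E1] [AddCommGroup Eee]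
  [AddGroup B0] [AddGroup B1] [AddCommGroup Bee]

/-- A morphism of quadratic pair modules: a triple of group homomorphisms commuting with
`H`, `P` and `∂`. -/
structure QPMHom (C : QPM C0 C1 Cee) (D : QPM D0 D1 Dee) where
  f0 : C0 →+ D0
  f1 : C1 →+ D1
  fee : Cee →+ Dee
  comm_d : ∀ z : C1, D.d (f1 z) = f0 (C.d z)
  comm_P : ∀ x : Cee, f1 (C.sq1.P x) = D.sq1.P (fee x)
  comm_H : ∀ y : C0, fee (C.sq0.H y) = D.sq0.H (f0 y)

/-- Composition of morphisms of quadratic pair modules. -/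
def QPMHom.comp {C : QPM C0 C1 Cee} {D : QPM D0 D1 Dee} {E : QPM E0 E1 Eee}
    (k : QPMHom D E) (f : QPMHom C D) : QPMHom C E where
  f0 := k.f0.comp f.f0
  f1 := k.f1.comp f.f1
  fee := k.fee.comp f.fee
  comm_d := fun z => by simp [k.comm_d, f.comm_d]
  comm_P := fun x => by simp [k.comm_P, f.comm_P]
  comm_H := fun y => by simp [k.comm_H, f.comm_H]

/-- The identity morphism of a quadratic pair module. -/
def QPMHom.id (C : QPM C0 C1 Cee) : QPMHom C C where
  f0 := AddMonoidHom.id _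
  f1 := AddMonoidHom.id _
  fee := AddMonoidHom.id _
  comm_d := fun _ => rfl
  comm_P := fun _ => rfl
  comm_H := fun _ => rfl

/-- A track `α : f ⇒ g` between morphisms of quadratic pair modules: a function
`α : C₀ → D₁` with `α(x+y) = α(x)^{f₀(y)} + α(y)`, `g₀(x) = f₀(x) + ∂α(x)` and
`g₁(z) = f₁(z) + α∂(z)`, where `u^v = u + P(∂(u)|v)_H`. -/
def IsTrack {C : QPM C0 C1 Cee} {D : QPM D0 D1 Dee} (f g : QPMHom C D)
    (α : C0 → D1) : Prop :=
  (∀ x y : C0,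
      α (x + y) = (α x + D.sq1.P (crossEff D.sq0.H (D.d (α x)) (f.f0 y))) + α y) ∧
  (∀ x : C0, g.f0 x = f.f0 x + D.d (α x)) ∧
  (∀ z : C1, g.f1 z = f.f1 z + α (C.d z))

/-- The image of `P` is central in a square group. -/
theorem SquareGroup.P_central {Xe Xee : Type*} [AddGroup Xe] [AddCommGroup Xee]
    (S : SquareGroup Xe Xee) (w : Xee) (a : Xe) : S.P w + a = a + S.P w := by
  have h := S.P_cross a (S.P w)
  rw [S.cross_P_right, map_zero] at h
  have h' : a + S.P w = S.P w + a + (-a - S.P w + a + S.P w) := by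
    simp [sub_eq_add_neg, add_assoc]
  rw [h', ← h, add_zero]

theorem SquareGroup.crossEff_zero_right {Xe Xee : Type*} [AddGroup Xe] [AddCommGroup Xee]
    (S : SquareGroup Xe Xee) (a : Xe) : crossEff S.H a 0 = 0 := by
  simpa using S.cross_P_right a 0

theorem QPM.crossEff_d (C : QPM C0 C1 Cee) (x z : C1) :
    crossEff C.sq0.H (C.d x) (C.d z) = crossEff C.sq1.H x z := by
  simp [crossEff, C.H_comp_d]

/-- For a quadratic pair module `C`, the formula
`x^y := x + P(∂(x)|y)_H` defines a right action of the group `C₀` on the group `C₁` by group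
automorphisms, and with this action `∂ : C₁ → C₀` is a crossed module. -/
theorem qpm_action_crossedModule (C : QPM C0 C1 Cee) :
    (∀ x : C1, x + C.sq1.P (crossEff C.sq0.H (C.d x) 0) = x) ∧
    (∀ (x : C1) (y y' : C0),
      (x + C.sq1.P (crossEff C.sq0.H (C.d x) y)) +
          C.sq1.P (crossEff C.sq0.H (C.d (x + C.sq1.P (crossEff C.sq0.H (C.d x) y))) y') =
        x + C.sq1.P (crossEff C.sq0.H (C.d x) (y + y'))) ∧
    (∀ (x x' : C1) (y : C0),
      (x + x') + C.sq1.P (crossEff C.sq0.H (C.d (x + x')) y) =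
        (x + C.sq1.P (crossEff C.sq0.H (C.d x) y)) +
          (x' + C.sq1.P (crossEff C.sq0.H (C.d x') y))) ∧
    (∀ (x : C1) (y : C0),
      C.d (x + C.sq1.P (crossEff C.sq0.H (C.d x) y)) = -y + C.d x + y) ∧
    (∀ x z : C1, x + C.sq1.P (crossEff C.sq0.H (C.d x) (C.d z)) = -z + x + z) := by
  refine ⟨fun x => ?_, fun x y y' => ?_, fun x x' y => ?_, fun x y => ?_, fun x z => ?_⟩
  · rw [C.sq0.crossEff_zero_right, map_zero, add_zero]
  · rw [map_add, C.d_comp_P, C.sq0.cross_add_left, C.sq0.cross_P_left, add_zero,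
      C.sq0.cross_add_right, map_add, add_assoc]
  · rw [map_add, C.sq0.cross_add_left, map_add, add_assoc, add_assoc x,
      ← add_assoc x', ← C.sq1.P_central _ x', add_assoc]
  · rw [map_add, C.d_comp_P, C.sq0.P_cross]
    simp [sub_eq_add_neg, add_assoc]
  · rw [C.crossEff_d, C.sq1.P_cross]
    simp [sub_eq_add_neg, add_assoc]
end

section
/- Let G_⊙ and L_⊙ be sign groups. Then (i_{G_⊙}, i_{L_⊙}) : G_⊙ × L_⊙ → G_⊙ ×̃ L_⊙, given by i_{G_⊙}(t) = t̄ and i_{L_⊙}(s) = s̄, is a twisted bilinear morphism, and it is universal: for every twisted bilinear morphism (f_⊙, g_⊙) : G_⊙ × L_⊙ → K_⊙ there is a unique morphism of sign groups φ : G_⊙ ×̃ L_⊙ → K_⊙ with φ∘i_{G_⊙} = f_⊙ and φ∘i_{L_⊙} = g_⊙. -/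
/-!
Reading the defining relations in the quotient shows that `t ↦ t̄` and `s ↦ s̄` are
homomorphisms sending `ι (-1)` to `ω` and satisfying the twisted commutation rule, so they form a
twisted bilinear morphism.

For universality, a twisted bilinear morphism `(f_⊙, g_⊙)` into `K_⊙` prescribes `t̄ ↦ f_⊙ t`,
`s̄ ↦ g_⊙ s`, `ω ↦ ι (-1)`. The relators are killed: the centrality relators because `ι (-1)` is
central in `K_⊙` (`signGroup_ι_comm`), the others by the hypotheses on `f_⊙` and `g_⊙`. The
induced homomorphism is compatible with `ι`, `∂` and `ε`, as is seen on generators, and it is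
unique because `ω` is itself the symbol of `ι (-1)`.
-/

open scoped TensorProduct


/-- A sign group: an extension `{±1} → G_⊙ → G` together with a homomorphism
`ε : G → {±1}`.  The group `{±1}` is modelled by `ℤˣ`. -/
structure SignGroupStr (Gt G : Type*) [Group Gt] [Group G] where
  ι : ℤˣ →* Gt
  d : Gt →* G
  ε : G →* ℤˣ
  ι_inj : Function.Injective ι
  d_surj : Function.Surjective d
  exact : ∀ x : Gt, d x = 1 ↔ ∃ u : ℤˣ, ι u = x

/-- The binomial coefficient `C(x,2) = x(x-1)/2` for `x ∈ {±1}`: it is `0` for `x = 1`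
and `1` for `x = -1`. -/
def c2 (u : ℤˣ) : ℕ := if u = 1 then 0 else 1

/-- A morphism of sign groups: a pair of group homomorphisms commuting with `ι`, `∂`
and `ε`. -/
def IsSignHom {Gt G Kt K : Type*} [Group Gt] [Group G] [Group Kt] [Group K]
    (S : SignGroupStr Gt G) (T : SignGroupStr Kt K) (ft : Gt →* Kt) (f : G →* K) : Prop :=
  (∀ u : ℤˣ, ft (S.ι u) = T.ι u) ∧
  (∀ x : Gt, T.d (ft x) = f (S.d x)) ∧
  (∀ a : G, T.ε (f a) = S.ε a)

/-- Generators of the twisted product of two sign groups: a symbol `t̄` for each `t ∈ G_⊙`,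
a symbol `s̄` for each `s ∈ L_⊙`, and a symbol `ω`. -/
inductive TwistGen (Gt Lt : Type*) : Type _
  | g : Gt → TwistGen Gt Lt
  | l : Lt → TwistGen Gt Lt
  | ω : TwistGen Gt Lt

variable {Gt G Lt L : Type*} [Group Gt] [Group G] [Group Lt] [Group L]

/-- The relators of the presentation of the twisted product `G_⊙ ×̃ L_⊙`. -/
inductive TwistRel (SG : SignGroupStr Gt G) (SL : SignGroupStr Lt L) :
    FreeGroup (TwistGen Gt Lt) → Prop
  | central (w : TwistGen Gt Lt) :
      TwistRel SG SL (FreeGroup.of .ω * FreeGroup.of w *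
        (FreeGroup.of (TwistGen.ω (Gt := Gt) (Lt := Lt)))⁻¹ * (FreeGroup.of w)⁻¹)
  | iotaG :
      TwistRel SG SL (FreeGroup.of (.g (SG.ι (-1))) *
        (FreeGroup.of (TwistGen.ω (Gt := Gt) (Lt := Lt)))⁻¹)
  | iotaL :
      TwistRel SG SL (FreeGroup.of (.l (SL.ι (-1))) *
        (FreeGroup.of (TwistGen.ω (Gt := Gt) (Lt := Lt)))⁻¹)
  | mulG (t₁ t₂ : Gt) :
      TwistRel SG SL (FreeGroup.of (.g (t₁ * t₂)) *
        (FreeGroup.of (.g t₁) * FreeGroup.of (.g t₂))⁻¹)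
  | mulL (s₁ s₂ : Lt) :
      TwistRel SG SL (FreeGroup.of (.l (s₁ * s₂)) *
        (FreeGroup.of (.l s₁) * FreeGroup.of (.l s₂))⁻¹)
  | twist (t : Gt) (s : Lt) :
      TwistRel SG SL (FreeGroup.of (.g t) * FreeGroup.of (.l s) *
        (FreeGroup.of (.l s) * FreeGroup.of (.g t) *
          (FreeGroup.of (TwistGen.ω (Gt := Gt) (Lt := Lt))) ^
            (c2 (SG.ε (SG.d t)) * c2 (SL.ε (SL.d s))))⁻¹)

/-- The twisted product `G_⊙ ×̃ L_⊙` of two sign groups, as a presented group. -/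
abbrev TwistProd (SG : SignGroupStr Gt G) (SL : SignGroupStr Lt L) : Type _ :=
  PresentedGroup {r | TwistRel SG SL r}

/-- The canonical map from generators to the twisted product. -/
def twistMk (SG : SignGroupStr Gt G) (SL : SignGroupStr Lt L) (w : TwistGen Gt Lt) :
    TwistProd SG SL :=
  PresentedGroup.of w

/-- The kernel of a sign group is central: a conjugate of `ι u` is again some `ι v`, and since
`ℤˣ` has only two elements and `ι` is injective, `v = u`. -/
theorem signGroup_ι_comm {Kt K : Type*} [Group Kt] [Group K] (S : SignGroupStr Kt K)
    (u : ℤˣ) (x : Kt) : Commute (S.ι u) x := by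
  rcases Int.units_eq_one_or u with rfl | rfl
  · rw [map_one]; exact Commute.one_left x
  obtain ⟨v, hv⟩ := (S.exact (x * S.ι (-1) * x⁻¹)).1 (by
    rw [map_mul, map_mul, (S.exact (S.ι (-1))).2 ⟨-1, rfl⟩, mul_one, map_inv, mul_inv_cancel])
  rcases Int.units_eq_one_or v with rfl | rfl
  · rw [map_one, eq_comm, conj_eq_one_iff, ← map_one S.ι] at hv
    exact absurd (S.ι_inj hv) (by decide)
  · exact eq_mul_inv_iff_mul_eq.1 hv

/-- `(i_{G_⊙}, i_{L_⊙}) : G_⊙ × L_⊙ → G_⊙ ×̃ L_⊙` is a twisted bilinear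
morphism of sign groups, and it is universal among twisted bilinear morphisms.

The sign group structure `ST` on the twisted product (with underlying group `G × L`) is given
with its characterizing values on generators. -/
theorem twistProd_universal (SG : SignGroupStr Gt G) (SL : SignGroupStr Lt L)
    (ST : SignGroupStr (TwistProd SG SL) (G × L))
    (hd_g : ∀ t : Gt, ST.d (twistMk SG SL (.g t)) = (SG.d t, 1))
    (hd_l : ∀ s : Lt, ST.d (twistMk SG SL (.l s)) = (1, SL.d s))
    (hω : ST.ι (-1) = twistMk SG SL .ω)
    (hε : ∀ p : G × L, ST.ε p = SG.ε p.1 * SL.ε p.2) :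
    -- `(i_{G_⊙}, i_{L_⊙})` is a twisted bilinear morphism:
    (∃ iGt : Gt →* TwistProd SG SL, (∀ t, iGt t = twistMk SG SL (.g t)) ∧
        IsSignHom SG ST iGt (MonoidHom.inl G L)) ∧
    (∃ iLt : Lt →* TwistProd SG SL, (∀ s, iLt s = twistMk SG SL (.l s)) ∧
        IsSignHom SL ST iLt (MonoidHom.inr G L)) ∧
    (∀ (a : G) (b : L),
        MonoidHom.inl G L a * MonoidHom.inr G L b =
          MonoidHom.inr G L b * MonoidHom.inl G L a) ∧
    (∀ (x : Gt) (y : Lt),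
        twistMk SG SL (.g x) * twistMk SG SL (.l y) =
          twistMk SG SL (.l y) * twistMk SG SL (.g x) *
            ST.ι ((-1) ^ (c2 (SG.ε (SG.d x)) * c2 (SL.ε (SL.d y))))) ∧
    -- universality:
    (∀ (Kt K : Type) (_ : Group Kt) (_ : Group K) (SK : SignGroupStr Kt K)
        (ft : Gt →* Kt) (f : G →* K) (gt : Lt →* Kt) (g : L →* K),
        IsSignHom SG SK ft f → IsSignHom SL SK gt g →
        (∀ (a : G) (b : L), f a * g b = g b * f a) →
        (∀ (x : Gt) (y : Lt),
          ft x * gt y = gt y * ft x * SK.ι ((-1) ^ (c2 (SG.ε (SG.d x)) * c2 (SL.ε (SL.d y))))) →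
        ∃! φ : TwistProd SG SL →* Kt,
          (∀ t, φ (twistMk SG SL (.g t)) = ft t) ∧
          (∀ s, φ (twistMk SG SL (.l s)) = gt s) ∧
          ∀ φb : G × L →* K, (∀ (a : G) (b : L), φb (a, b) = f a * g b) →
            IsSignHom ST SK φ φb) := by
  -- the defining relations, read in the quotient
  have hrel : ∀ {r}, TwistRel SG SL r → PresentedGroup.mk {r | TwistRel SG SL r} r = 1 :=
    fun h => PresentedGroup.one_of_mem h
  have hmulG : ∀ a b, twistMk SG SL (.g (a * b)) =
      twistMk SG SL (.g a) * twistMk SG SL (.g b) := by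
    intro a b
    have h := hrel (.mulG a b)
    rw [map_mul, map_inv, mul_inv_eq_one, map_mul] at h
    exact h
  have hmulL : ∀ a b, twistMk SG SL (.l (a * b)) =
      twistMk SG SL (.l a) * twistMk SG SL (.l b) := by
    intro a b
    have h := hrel (.mulL a b)
    rw [map_mul, map_inv, mul_inv_eq_one, map_mul] at h
    exact h
  have hιG : twistMk SG SL (.g (SG.ι (-1))) = twistMk SG SL .ω := by
    have h := hrel .iotaG
    rw [map_mul, map_inv, mul_inv_eq_one] at h
    exact h
  have hιL : twistMk SG SL (.l (SL.ι (-1))) = twistMk SG SL .ω := by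
    have h := hrel .iotaL
    rw [map_mul, map_inv, mul_inv_eq_one] at h
    exact h
  have htw : ∀ x y, twistMk SG SL (.g x) * twistMk SG SL (.l y) =
      twistMk SG SL (.l y) * twistMk SG SL (.g x) *
        twistMk SG SL .ω ^ (c2 (SG.ε (SG.d x)) * c2 (SL.ε (SL.d y))) := by
    intro x y
    have h := hrel (.twist x y)
    rw [map_mul, map_inv, mul_inv_eq_one, map_mul, map_mul, map_mul, map_pow] at h
    exact h
  let iG : Gt →* TwistProd SG SL := MonoidHom.mk' (fun t => twistMk SG SL (.g t)) hmulG
  let iL : Lt →* TwistProd SG SL := MonoidHom.mk' (fun t => twistMk SG SL (.l t)) hmulL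
  refine ⟨⟨iG, fun _ => rfl, ?_, hd_g, fun a => by simp [hε]⟩,
    ⟨iL, fun _ => rfl, ?_, hd_l, fun a => by simp [hε]⟩, fun a b => by simp,
    fun x y => by rw [map_pow, hω]; exact htw x y, ?_⟩
  · intro u
    rcases Int.units_eq_one_or u with rfl | rfl
    · simp only [map_one]
    · rw [hω]; exact hιG
  · intro u
    rcases Int.units_eq_one_or u with rfl | rfl
    · simp only [map_one]
    · rw [hω]; exact hιL
  intro Kt K _ _ SK ft f gt g hf hg _ hfg
  obtain ⟨hfι, hfd, hfε⟩ := hf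
  obtain ⟨hgι, hgd, hgε⟩ := hg
  let F : TwistGen Gt Lt → Kt
    | .g t => ft t
    | .l s => gt s
    | .ω => SK.ι (-1)
  have hF : ∀ r ∈ {r | TwistRel SG SL r}, FreeGroup.lift F r = 1 := by
    rintro r (w | _ | _ | ⟨a, b⟩ | ⟨a, b⟩ | ⟨x, y⟩)
    · simp only [map_mul, map_inv, FreeGroup.lift_apply_of]
      rw [mul_inv_eq_one, mul_inv_eq_iff_eq_mul]
      exact (signGroup_ι_comm SK (-1) (F w)).eq
    · simp [F, hfι]
    · simp [F, hgι]
    · simp [F]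
    · simp [F]
    · simp only [map_mul, map_inv, map_pow, FreeGroup.lift_apply_of]
      rw [mul_inv_eq_one, ← map_pow]
      exact hfg x y
  have hφ : ∀ w, PresentedGroup.toGroup hF (twistMk SG SL w) = F w :=
    fun w => PresentedGroup.toGroup.of hF
  refine ⟨PresentedGroup.toGroup hF, ⟨fun t => hφ (.g t), fun s => hφ (.l s), ?_⟩, ?_⟩
  · intro φb hφb
    refine ⟨fun u => ?_, fun x => ?_, ?_⟩
    · rcases Int.units_eq_one_or u with rfl | rfl
      · simp only [map_one]
      · rw [hω]; exact hφ .ω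
    · -- both sides are homomorphisms in `x`, so it suffices to compare them on generators
      suffices h : SK.d.comp (PresentedGroup.toGroup hF) = φb.comp ST.d from
        DFunLike.congr_fun h x
      refine PresentedGroup.ext fun w => ?_
      change SK.d (PresentedGroup.toGroup hF (twistMk SG SL w)) = φb (ST.d (twistMk SG SL w))
      rw [hφ]
      rcases w with t | s | _
      · rw [hd_g, hφb, map_one, mul_one]; exact hfd t
      · rw [hd_l, hφb, map_one, one_mul]; exact hgd s
      · rw [← hω, (ST.exact _).2 ⟨-1, rfl⟩, map_one]
        exact (SK.exact _).2 ⟨-1, rfl⟩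
    · rintro ⟨a, b⟩
      rw [hφb, map_mul, hfε, hgε, hε]
  · rintro ψ ⟨hψg, hψl, -⟩
    refine PresentedGroup.ext fun w => ?_
    change ψ (twistMk SG SL w) = PresentedGroup.toGroup hF (twistMk SG SL w)
    rw [hφ]
    rcases w with t | s | _
    · exact hψg t
    · exact hψl s
    · -- `ω` is the symbol of `ι (-1)`, so its image is forced
      rw [← hιG, hψg]; exact hfι (-1)
end

section
/- Let n, m ≥ 1 and N ≥ n+m. In the Clifford algebra C₊(N) the identity 2^{−(m−1)} · (e_{n+1}−e_n)(e_{n+2}−e_{n+1})⋯(e_{n+m−1}−e_{n+m−2}) · e_{n+m−1}e_{n+m} · (e_{n+m−1}−e_{n+m−2})⋯(e_{n+2}−e_{n+1})(e_{n+1}−e_n) = e_n·e_{n+m} holds, where for m = 1 the products of difference factors are empty (equal to 1) and the identity reads e_n e_{n+1} = e_n e_{n+1}. -/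
/-!
If `a, b, c` are pairwise anticommuting and `a² = b² = 1`, then
`(b - a) (b c) (b - a) = 2 a c`: up to the scalar `-2`, conjugating by `b - a` is the reflection
swapping `a` and `b`, and moving `c` past `b - a` costs a sign that cancels the other one
(`conj_step`). Applied to `b = e_{n+p+1}`, `a = e_{n+p}`, `c = e_j`, this says that the innermost
pair of difference factors lowers the index of the first generator by one and contributes a
factor `2`. Induction on the number of pairs (`conj_prod`) gives the identity.
-/

/-- The positive Clifford algebra `C₊(N)`: the Clifford algebra over `ℝ` of the standard
positive-definite quadratic form on `ℝ^N`. -/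
noncomputable abbrev CliffordPlus (N : ℕ) : Type :=
  CliffordAlgebra (QuadraticMap.weightedSumSquares ℝ (fun _ : Fin N => (1 : ℝ)))

/-- The generator `e_j` (for `1 ≤ j ≤ N`) of `C₊(N)`, given by the `j`-th standard basis
vector of `ℝ^N`. -/
noncomputable def cliffGen (N : ℕ) (j : ℕ) : CliffordPlus N :=
  CliffordAlgebra.ι _ (fun i : Fin N => if (i : ℕ) + 1 = j then (1 : ℝ) else 0)

theorem cliffGen_sq (N j : ℕ) (h1 : 1 ≤ j) (hj : j ≤ N) :
    cliffGen N j * cliffGen N j = 1 := by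
  unfold cliffGen
  rw [CliffordAlgebra.ι_sq_scalar, QuadraticMap.weightedSumSquares_apply,
    Finset.sum_eq_single (⟨j - 1, by omega⟩ : Fin N)]
  · simp [Nat.sub_add_cancel h1]
  · intro b _ hb
    have : (b : ℕ) + 1 ≠ j := fun h => hb (Fin.ext (by simp; omega))
    simp [this]
  · simp

theorem cliffGen_anticomm (N i j : ℕ) (hij : i ≠ j) :
    cliffGen N j * cliffGen N i = -(cliffGen N i * cliffGen N j) := by
  unfold cliffGen
  refine CliffordAlgebra.ι_mul_ι_comm_of_isOrtho ?_
  rw [QuadraticMap.isOrtho_def]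
  simp only [QuadraticMap.weightedSumSquares_apply, ← Finset.sum_add_distrib]
  refine Finset.sum_congr rfl fun k _ => ?_
  by_cases h : (k : ℕ) + 1 = i
  · simp [h, hij]
  · simp [h]

/-- Conjugation by `b - a` turns `b c` into `2 a c` for pairwise anticommuting `a, b, c` with
`a² = b² = 1`. -/
theorem conj_step {A : Type*} [Ring A] (a b c : A) (ha : a * a = 1) (hb : b * b = 1)
    (hba : b * a = -(a * b)) (hca : c * a = -(a * c)) (hcb : c * b = -(b * c)) :
    (b - a) * (b * c) * (b - a) = 2 * (a * c) := by
  have hd : (b - a) * b * (b - a) = -(2 * a) := by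
    calc (b - a) * b * (b - a)
        = (b * b) * b - (b * b) * a - a * (b * b) + a * (b * a) := by noncomm_ring
      _ = b - a - a - (a * a) * b := by rw [hb, hba]; noncomm_ring
      _ = -(2 * a) := by rw [ha]; noncomm_ring
  calc (b - a) * (b * c) * (b - a)
      = (b - a) * b * (c * b - c * a) := by noncomm_ring
    _ = -((b - a) * b * (b - a)) * c := by rw [hca, hcb]; noncomm_ring
    _ = 2 * (a * c) := by rw [hd]; noncomm_ring

/-- The identity with `p` pairs of difference factors and an arbitrary second generator `e_j`,
`j > n + p`; leaving `j` independent of `p` is what makes the induction on `p` go through. -/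
theorem conj_prod (N n j : ℕ) (hn : 1 ≤ n) (hj : j ≤ N) (p : ℕ) (hp : n + p < j) :
    ((List.range p).map (fun k => cliffGen N (n + k + 1) - cliffGen N (n + k))).prod *
        (cliffGen N (n + p) * cliffGen N j) *
        ((List.range p).reverse.map
          (fun k => cliffGen N (n + k + 1) - cliffGen N (n + k))).prod =
      ((2 : ℝ) ^ p) • (cliffGen N n * cliffGen N j) := by
  induction p with
  | zero => simp
  | succ p ih =>
    have key := conj_step (cliffGen N (n + p)) (cliffGen N (n + p + 1)) (cliffGen N j)
      (cliffGen_sq N _ (by omega) (by omega)) (cliffGen_sq N _ (by omega) (by omega))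
      (cliffGen_anticomm N _ _ (by omega)) (cliffGen_anticomm N _ _ (by omega))
      (cliffGen_anticomm N _ _ (by omega))
    have ih := ih (by omega)
    simp only [List.range_succ, List.map_append, List.prod_append, List.reverse_append,
      List.map_cons, List.map_nil, List.prod_cons, List.prod_nil, mul_one,
      List.reverse_cons, List.reverse_nil, List.nil_append, List.cons_append]
    generalize (List.map (fun k => cliffGen N (n + k + 1) - cliffGen N (n + k))
      (List.range p)).prod = P at ih ⊢
    generalize (List.map (fun k => cliffGen N (n + k + 1) - cliffGen N (n + k))
      (List.range p).reverse).prod = R at ih ⊢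
    rw [← add_assoc n p 1]
    generalize cliffGen N (n + p + 1) - cliffGen N (n + p) = d at key ⊢
    calc P * d * (cliffGen N (n + p + 1) * cliffGen N j) * (d * R)
        = P * (d * (cliffGen N (n + p + 1) * cliffGen N j) * d) * R := by
          simp only [mul_assoc]
      _ = (2 : ℝ) • (P * (cliffGen N (n + p) * cliffGen N j) * R) := by
          rw [key, two_mul, two_smul, mul_add, add_mul]
      _ = _ := by rw [ih, smul_smul, pow_succ']

/-- **Statement 18.**  In `C₊(N)`, for `n, m ≥ 1` and `n + m ≤ N`,
`2^{-(m-1)} ⬝ (e_{n+1}-e_n)(e_{n+2}-e_{n+1})⋯(e_{n+m-1}-e_{n+m-2}) ⬝ e_{n+m-1} e_{n+m} ⬝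
(e_{n+m-1}-e_{n+m-2})⋯(e_{n+2}-e_{n+1})(e_{n+1}-e_n) = e_n ⬝ e_{n+m}`;
for `m = 1` the difference products are empty. -/
theorem cliffordPlus_conjugation_identity (N n m : ℕ) (hn : 1 ≤ n) (hm : 1 ≤ m)
    (hNm : n + m ≤ N) :
    (((2 : ℝ) ^ (m - 1))⁻¹) •
        (((List.range (m - 1)).map
              (fun k => cliffGen N (n + k + 1) - cliffGen N (n + k))).prod *
          (cliffGen N (n + m - 1) * cliffGen N (n + m)) *
          ((List.range (m - 1)).reverse.map
              (fun k => cliffGen N (n + k + 1) - cliffGen N (n + k))).prod) =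
      cliffGen N n * cliffGen N (n + m) := by
  obtain ⟨p, rfl⟩ : ∃ p, m = p + 1 := ⟨m - 1, by omega⟩
  have h := conj_prod N n (n + (p + 1)) hn hNm p (by omega)
  have e : n + (p + 1) - 1 = n + p := by omega
  rw [Nat.add_sub_cancel, e, h, smul_smul, inv_mul_cancel₀ (by positivity), one_smul]
end
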